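/- Suppose C is a contribution profile with C_i > 0 for all i ∈ N and every agent has at least one acceptable project, and let δ be a Nash distribution for C. Then u_i(δ) > 0 for every i ∈ N, and for every project x ∈ A: Σ_{i∈N} C_i · u_i(x) / u_i(δ) ≤ 1, with equality whenever δ(x) > 0. -/

import Mathlib

/-!
A Nash distribution `δ` has a positive Nash product, because the uniform distribution has one, so
all utilities at `δ` are positive and near `δ` the Nash product can be replaced by its logarithm
`∑ C i * log (util (u i) ·)`. Distributions form a convex set, so Fermat's theorem says that the
derivative of this logarithm at `δ` is nonpositive towards every other distribution. Moving towards
the whole pool spent on `x` gives the inequality at `x`. Averaged against `δ`, these inequalities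
hold with equality, so none of them is strict where `δ` is positive.
-/

open Finset

/-- A distribution of value `V`: nonnegative and sums to `V`. -/
def IsDistribution {A : Type*} [Fintype A] (δ : A → ℝ) (V : ℝ) : Prop :=
  (∀ x, 0 ≤ δ x) ∧ ∑ x, δ x = V

/-- Agent's (linear) utility of a distribution. -/
def util {A : Type*} [Fintype A] (u : A → ℝ) (δ : A → ℝ) : ℝ :=
  ∑ x, δ x * u x

/-- The Nash product of a distribution (real exponentiation, `0 ^ 0 = 1`). -/
noncomputable def nashProduct {A N : Type*} [Fintype A] [Fintype N]
    (u : N → A → ℝ) (C : N → ℝ) (δ : A → ℝ) : ℝ :=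
  ∏ i, (util (u i) δ) ^ (C i)

/-- A Nash distribution for contribution profile `C`: a maximizer of the Nash
product over `Δ(|C|)`. -/
def IsNashDistribution {A N : Type*} [Fintype A] [Fintype N]
    (u : N → A → ℝ) (C : N → ℝ) (δ : A → ℝ) : Prop :=
  IsDistribution δ (∑ i, C i) ∧
    ∀ δ' : A → ℝ, IsDistribution δ' (∑ i, C i) →
      nashProduct u C δ' ≤ nashProduct u C δ

section FirstOrder

open Filter Topology

variable {ι E : Type*} {t : Finset ι} {s : Set E} {f : ι → E → ℝ} {c : ι → ℝ} {a : E}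

lemma isLocalMaxOn_sum_mul_log_of_prod_rpow [TopologicalSpace E]
    (hf : ∀ i ∈ t, ContinuousWithinAt (f i) s a) (hpos : ∀ i ∈ t, 0 < f i a)
    (hmax : IsLocalMaxOn (fun z => ∏ i ∈ t, f i z ^ c i) s a) :
    IsLocalMaxOn (fun z => ∑ i ∈ t, c i * Real.log (f i z)) s a := by
  have log_prod_rpow {z : E} (hz : ∀ i ∈ t, 0 < f i z) :
      Real.log (∏ i ∈ t, f i z ^ c i) = ∑ i ∈ t, c i * Real.log (f i z) := by
    rw [Real.log_prod fun i hi => (Real.rpow_pos_of_pos (hz i hi) _).ne']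
    exact sum_congr rfl fun i hi => Real.log_rpow (hz i hi) _
  have hpos_near : ∀ᶠ z in 𝓝[s] a, ∀ i ∈ t, 0 < f i z :=
    t.eventually_all.2 fun i hi => (hf i hi).eventually (lt_mem_nhds (hpos i hi))
  filter_upwards [hpos_near, hmax] with z hz hle
  rw [← log_prod_rpow hz, ← log_prod_rpow hpos]
  exact Real.log_le_log (prod_pos fun i hi => Real.rpow_pos_of_pos (hz i hi) _) hle

lemma sum_mul_div_nonpos_of_isLocalMaxOn_prod_rpow [NormedAddCommGroup E] [NormedSpace ℝ E]
    {f' : ι → E →L[ℝ] ℝ} {y : E}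
    (hf : ∀ i ∈ t, HasFDerivWithinAt (f i) (f' i) s a) (hpos : ∀ i ∈ t, 0 < f i a)
    (hmax : IsLocalMaxOn (fun z => ∏ i ∈ t, f i z ^ c i) s a) (hy : y ∈ posTangentConeAt s a) :
    ∑ i ∈ t, c i * f' i y / f i a ≤ 0 := by
  have hderiv : HasFDerivWithinAt (fun z => ∑ i ∈ t, c i * Real.log (f i z))
      (∑ i ∈ t, c i • (f i a)⁻¹ • f' i) s a :=
    .fun_sum fun i hi => ((hf i hi).log (hpos i hi).ne').const_mul (c i)
  have hlog := isLocalMaxOn_sum_mul_log_of_prod_rpow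
    (fun i hi => (hf i hi).continuousWithinAt) hpos hmax
  calc ∑ i ∈ t, c i * f' i y / f i a
      = (∑ i ∈ t, c i • (f i a)⁻¹ • f' i) y := by
        simp only [_root_.sum_apply, smul_apply, smul_eq_mul]
        exact sum_congr rfl fun i _ => by ring
    _ ≤ 0 := hlog.hasFDerivWithinAt_nonpos hderiv hy

end FirstOrder

section Distribution

variable {A : Type*} [Fintype A] {V : ℝ}

lemma convex_setOf_isDistribution (V : ℝ) : Convex ℝ {δ : A → ℝ | IsDistribution δ V} := by
  rintro δ ⟨hδ, hδV⟩ ε ⟨hε, hεV⟩ a b ha hb hab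
  refine ⟨fun x => add_nonneg (mul_nonneg ha (hδ x)) (mul_nonneg hb (hε x)), ?_⟩
  simp only [Pi.add_apply, Pi.smul_apply, smul_eq_mul, sum_add_distrib, ← mul_sum, hδV, hεV,
    ← add_mul, hab, one_mul]

lemma isDistribution_uniform [Nonempty A] (hV : 0 ≤ V) :
    IsDistribution (fun _ : A => V / Fintype.card A) V :=
  ⟨fun _ => by positivity, by simp [mul_div_cancel₀]⟩

lemma isDistribution_single [DecidableEq A] (x : A) (hV : 0 ≤ V) :
    IsDistribution (Pi.single x V) V :=
  ⟨(Pi.single_nonneg (α := fun _ => ℝ) (i := x)).2 hV, by simp⟩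

end Distribution

section Utility

variable {A : Type*} [Fintype A] {u δ : A → ℝ}

/-- The utility `util u` as a continuous linear functional of the distribution. -/
noncomputable def utilCLM (u : A → ℝ) : (A → ℝ) →L[ℝ] ℝ :=
  ∑ x, u x • ContinuousLinearMap.proj x

lemma utilCLM_apply (u δ : A → ℝ) : utilCLM u δ = util u δ := by
  simp [utilCLM, util, mul_comm]

lemma hasFDerivAt_util (u δ : A → ℝ) : HasFDerivAt (util u) (utilCLM u) δ :=
  (utilCLM u).hasFDerivAt.congr_of_eventuallyEq (.of_forall fun ε => (utilCLM_apply u ε).symm)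

lemma util_single [DecidableEq A] (u : A → ℝ) (x : A) (V : ℝ) :
    util u (Pi.single x V) = V * u x := by
  simp [util, Pi.single_apply]

lemma util_nonneg (hu : ∀ x, 0 ≤ u x) (hδ : ∀ x, 0 ≤ δ x) : 0 ≤ util u δ :=
  sum_nonneg fun x _ => mul_nonneg (hδ x) (hu x)

lemma util_pos_of_pos (hu : ∀ x, 0 ≤ u x) (hacc : ∃ x, 0 < u x) (hδ : ∀ x, 0 < δ x) :
    0 < util u δ :=
  let ⟨x, hx⟩ := hacc
  sum_pos' (fun y _ => mul_nonneg (hδ y).le (hu y)) ⟨x, mem_univ x, mul_pos (hδ x) hx⟩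

end Utility

section NashProduct

variable {A N : Type*} [Fintype A] [Fintype N] {u : N → A → ℝ} {C : N → ℝ} {δ : A → ℝ}

lemma nashProduct_pos_of_util_pos (hU : ∀ i, 0 < util (u i) δ) : 0 < nashProduct u C δ :=
  prod_pos fun i _ => Real.rpow_pos_of_pos (hU i) _

lemma util_ne_zero_of_nashProduct_ne_zero {i : N} (hC : C i ≠ 0) (h : nashProduct u C δ ≠ 0) :
    util (u i) δ ≠ 0 := fun h0 =>
  h (prod_eq_zero (mem_univ i) (by rw [h0, Real.zero_rpow hC]))

lemma sum_mul_sum_mul_div_util (hU : ∀ i, util (u i) δ ≠ 0) :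
    ∑ x, δ x * ∑ i, C i * u i x / util (u i) δ = ∑ i, C i :=
  calc ∑ x, δ x * ∑ i, C i * u i x / util (u i) δ
      = ∑ i, ∑ x, C i / util (u i) δ * (δ x * u i x) := by
        simp only [mul_sum]
        rw [sum_comm]
        exact sum_congr rfl fun i _ => sum_congr rfl fun x _ => by ring
    _ = ∑ i, C i / util (u i) δ * util (u i) δ := by simp only [← mul_sum, util]
    _ = ∑ i, C i := sum_congr rfl fun i _ => div_mul_cancel₀ _ (hU i)

end NashProduct

namespace IsNashDistribution

variable {A N : Type*} [Fintype A] [Fintype N] {u : N → A → ℝ} {C : N → ℝ} {δ : A → ℝ}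

lemma nashProduct_pos [Nonempty A] (hδ : IsNashDistribution u C δ) (hu : ∀ i x, 0 ≤ u i x)
    (hacc : ∀ i, ∃ x, 0 < u i x) (hV : 0 < ∑ i, C i) : 0 < nashProduct u C δ :=
  calc 0 < nashProduct u C fun _ => (∑ i, C i) / Fintype.card A :=
        nashProduct_pos_of_util_pos fun i => util_pos_of_pos (hu i) (hacc i) fun _ => by positivity
    _ ≤ nashProduct u C δ := hδ.2 _ (isDistribution_uniform hV.le)

lemma util_pos (hδ : IsNashDistribution u C δ) (hu : ∀ i x, 0 ≤ u i x)
    (hacc : ∀ i, ∃ x, 0 < u i x) (hC : ∀ i, 0 ≤ C i) {i : N} (hi : 0 < C i) :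
    0 < util (u i) δ := by
  have : Nonempty A := (hacc i).nonempty
  have hV : 0 < ∑ j, C j := sum_pos' (fun j _ => hC j) ⟨i, mem_univ i, hi⟩
  exact (util_nonneg (hu i) hδ.1.1).lt_of_ne'
    (util_ne_zero_of_nashProduct_ne_zero hi.ne' (hδ.nashProduct_pos hu hacc hV).ne')

lemma sum_mul_util_div_util_le (hδ : IsNashDistribution u C δ) (hU : ∀ i, 0 < util (u i) δ)
    {ε : A → ℝ} (hε : IsDistribution ε (∑ i, C i)) :
    ∑ i, C i * util (u i) ε / util (u i) δ ≤ ∑ i, C i := by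
  have hmax : IsMaxOn (nashProduct u C) {ε | IsDistribution ε (∑ i, C i)} δ := hδ.2
  have htangent : ε - δ ∈ posTangentConeAt {ε | IsDistribution ε (∑ i, C i)} δ :=
    sub_mem_posTangentConeAt_of_segment_subset
      ((convex_setOf_isDistribution _).segment_subset hδ.1 hε)
  have hderiv : ∑ i, C i * utilCLM (u i) (ε - δ) / util (u i) δ ≤ 0 :=
    sum_mul_div_nonpos_of_isLocalMaxOn_prod_rpow
      (fun i _ => (hasFDerivAt_util (u i) δ).hasFDerivWithinAt) (fun i _ => hU i)
      hmax.localize htangent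
  simpa only [map_sub, utilCLM_apply, mul_sub, sub_div, sum_sub_distrib,
    mul_div_cancel_right₀ _ (hU _).ne', sub_nonpos] using hderiv

lemma sum_mul_div_util_le_one (hδ : IsNashDistribution u C δ) (hC : ∀ i, 0 ≤ C i)
    (hU : ∀ i, 0 < util (u i) δ) (x : A) : ∑ i, C i * u i x / util (u i) δ ≤ 1 := by
  classical
  rcases (sum_nonneg fun i _ => hC i : 0 ≤ ∑ i, C i).eq_or_lt' with hV | hV
  · have hC0 : ∀ i, C i = 0 := fun i =>
      (sum_eq_zero_iff_of_nonneg fun j _ => hC j).1 hV i (mem_univ i)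
    simp [hC0]
  · refine le_of_mul_le_mul_left ?_ hV
    calc (∑ i, C i) * ∑ i, C i * u i x / util (u i) δ
        = ∑ i, C i * util (u i) (Pi.single x (∑ i, C i)) / util (u i) δ := by
          rw [mul_sum]
          exact sum_congr rfl fun i _ => by rw [util_single]; ring
      _ ≤ (∑ i, C i) * 1 :=
          (hδ.sum_mul_util_div_util_le hU (isDistribution_single x hV.le)).trans_eq
            (mul_one _).symm

lemma sum_mul_div_util_eq_one (hδ : IsNashDistribution u C δ) (hC : ∀ i, 0 ≤ C i)
    (hU : ∀ i, 0 < util (u i) δ) {x : A} (hx : 0 < δ x) :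
    ∑ i, C i * u i x / util (u i) δ = 1 := by
  have hle : ∀ y ∈ univ, δ y * ∑ i, C i * u i y / util (u i) δ ≤ δ y := fun y _ =>
    mul_le_of_le_one_right (hδ.1.1 y) (hδ.sum_mul_div_util_le_one hC hU y)
  have hsum : ∑ y, δ y * ∑ i, C i * u i y / util (u i) δ = ∑ y, δ y :=
    (sum_mul_sum_mul_div_util fun i => (hU i).ne').trans hδ.1.2.symm
  exact (mul_eq_left₀ hx.ne').1 ((sum_eq_sum_iff_of_le hle).1 hsum x (mem_univ x))

end IsNashDistribution

theorem nash_first_order_conditions {A N : Type*} [Fintype A] [Nonempty A] [Fintype N]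
    (u : N → A → ℝ) (hu : ∀ i x, 0 ≤ u i x)
    (C : N → ℝ) (hC : ∀ i, 0 < C i)
    (hacc : ∀ i, ∃ x, 0 < u i x)
    (δ : A → ℝ) (hδ : IsNashDistribution u C δ) :
    (∀ i, 0 < util (u i) δ) ∧
      ∀ x, (∑ i, C i * u i x / util (u i) δ) ≤ 1 ∧
        (0 < δ x → (∑ i, C i * u i x / util (u i) δ) = 1) := by
  have hU : ∀ i, 0 < util (u i) δ := fun i => hδ.util_pos hu hacc (fun j => (hC j).le) (hC i)
  exact ⟨hU, fun x => ⟨hδ.sum_mul_div_util_le_one (fun i => (hC i).le) hU x,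
    hδ.sum_mul_div_util_eq_one (fun i => (hC i).le) hU⟩⟩
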